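/- Let 𝔸 be a layered Heyting algebra, Pr(𝔸) its set of prime filters ordered by inclusion with ternary relation R F₀ F₁ F₂ iff ∀ a ∈ F₀, b ∈ F₁: a ▸ b ∈ F₂. The map h(a) = {F ∈ Pr(𝔸) | a ∈ F} satisfies h(a ▸ b) = h(a) ▸_R h(b), where h(a) ▸_R h(b) = {F | ∃ F', G, H: F' ⊆ F, R G H F', G ∈ h(a), H ∈ h(b)}. -/

import Mathlib

/-- A layered Heyting algebra: a Heyting algebra equipped with binary operations
`lay` (▸), `limp` (-▸) and `rimp` (▸-) satisfying the residuation law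
`a ▸ b ≤ c ↔ a ≤ b -▸ c ↔ b ≤ a ▸- c`. -/
class LayeredHeytingAlgebra (A : Type*) extends HeytingAlgebra A where
  lay : A → A → A
  limp : A → A → A
  rimp : A → A → A
  lay_le_iff_limp : ∀ a b c : A, lay a b ≤ c ↔ a ≤ limp b c
  lay_le_iff_rimp : ∀ a b c : A, lay a b ≤ c ↔ b ≤ rimp a c

open LayeredHeytingAlgebra

/-- A prime filter of the underlying lattice of a layered Heyting algebra. -/
def IsPrimeFilter {A : Type*} [LayeredHeytingAlgebra A] (F : Set A) : Prop :=
  F.Nonempty ∧ (∀ ⦃a b : A⦄, a ∈ F → a ≤ b → b ∈ F) ∧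
    (∀ ⦃a b : A⦄, a ∈ F → b ∈ F → a ⊓ b ∈ F) ∧ (⊥ : A) ∉ F ∧
    ∀ a b : A, a ⊔ b ∈ F → a ∈ F ∨ b ∈ F

/-- The set of prime filters of `A`. -/
def PF (A : Type*) [LayeredHeytingAlgebra A] : Type _ :=
  {F : Set A // IsPrimeFilter F}

/-- The ternary relation on prime filters: `R F₀ F₁ F₂` iff for all `a ∈ F₀`
and `b ∈ F₁`, `a ▸ b ∈ F₂`. -/
def Rpf {A : Type*} [LayeredHeytingAlgebra A] (F₀ F₁ F₂ : PF A) : Prop :=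
  ∀ a ∈ F₀.val, ∀ b ∈ F₁.val, lay a b ∈ F₂.val

/-- The representation map `h(a) = {F | a ∈ F}`. -/
def hrep {A : Type*} [LayeredHeytingAlgebra A] (a : A) : Set (PF A) :=
  {F : PF A | a ∈ F.val}

theorem sep_aux {A : Type*} [LayeredHeytingAlgebra A] (I : Set A) (h0 : (⊥ : A) ∈ I)
    (hd : ∀ x y : A, x ≤ y → y ∈ I → x ∈ I) (hs : ∀ x y : A, x ∈ I → y ∈ I → x ⊔ y ∈ I)
    (a : A) (ha : a ∉ I) : ∃ G : PF A, a ∈ G.val ∧ ∀ x ∈ G.val, x ∉ I := by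
  let I' : Order.Ideal A :=
    { carrier := I
      lower' := fun x y hxy hx => hd y x hxy hx
      nonempty' := ⟨⊥, h0⟩
      directed' := fun x hx y hy => ⟨x ⊔ y, hs x y hx hy, le_sup_left, le_sup_right⟩ }
  have hdis : Disjoint ((Order.PFilter.principal a : Order.PFilter A) : Set A) (I' : Set A) := by
    rw [Set.disjoint_left]
    intro x hx hxI
    have hax : a ≤ x := by simpa using hx
    exact ha (hd a x hax hxI)
  obtain ⟨J, hJ, hIJ, hJd⟩ := DistribLattice.prime_ideal_of_disjoint_filter_ideal hdis
  have haJ : a ∉ J := fun h => Set.disjoint_left.mp hJd (by simp) h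
  refine ⟨⟨{x | x ∉ J}, ⟨a, haJ⟩, ?_, ?_, ?_, ?_⟩, haJ, fun x hx hxI => hx (hIJ hxI)⟩
  · intro x y hx hxy hy
    exact hx (J.lower hxy hy)
  · intro x y hx hy hxy
    rcases hJ.mem_or_mem hxy with h | h
    · exact hx h
    · exact hy h
  · intro h
    exact h (hIJ h0)
  · intro x y hxy
    by_contra hc
    have hx : x ∈ J := by by_contra h; exact hc (Or.inl h)
    have hy : y ∈ J := by by_contra h; exact hc (Or.inr h)
    exact hxy (Order.Ideal.sup_mem hx hy)

theorem lay_mono_aux {A : Type*} [LayeredHeytingAlgebra A] {a a' b b' : A} (h : a ≤ a')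
    (h' : b ≤ b') : lay a b ≤ lay a' b' := by
  have h1 : lay a b ≤ lay a' b :=
    (lay_le_iff_limp _ _ _).2 (h.trans ((lay_le_iff_limp _ _ _).1 le_rfl))
  have h2 : lay a' b ≤ lay a' b' :=
    (lay_le_iff_rimp _ _ _).2 (h'.trans ((lay_le_iff_rimp _ _ _).1 le_rfl))
  exact h1.trans h2

theorem hrep_lay {A : Type*} [LayeredHeytingAlgebra A] (a b : A) :
    hrep (lay a b) =
      {F : PF A | ∃ F' G H : PF A, F'.val ⊆ F.val ∧ Rpf G H F' ∧
        G ∈ hrep a ∧ H ∈ hrep b} := by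
  ext F
  obtain ⟨F, hF⟩ := F
  have hF' := hF
  obtain ⟨-, hup, hinf, hbot, hpr⟩ := hF'
  constructor
  · intro hab
    change lay a b ∈ F at hab
    obtain ⟨G, haG, hG⟩ := sep_aux {x : A | lay x b ∉ F}
      (fun h => hbot (hup h ((lay_le_iff_limp _ _ _).2 bot_le)))
      (fun x y hxy hy hx => hy (hup hx (lay_mono_aux hxy le_rfl)))
      (fun x y hx hy hxy => by
        have : lay (x ⊔ y) b ≤ lay x b ⊔ lay y b :=
          (lay_le_iff_limp _ _ _).2 (sup_le
            ((lay_le_iff_limp _ _ _).1 le_sup_left) ((lay_le_iff_limp _ _ _).1 le_sup_right))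
        exact (hpr _ _ (hup hxy this)).elim hx hy)
      a (fun h => h hab)
    obtain ⟨H, hbH, hH⟩ := sep_aux {y : A | ∃ x ∈ G.val, lay x y ∉ F}
      ⟨a, haG, fun h => hbot (hup h ((lay_le_iff_rimp _ _ _).2 bot_le))⟩
      (fun x y hxy ⟨z, hz, hzy⟩ => ⟨z, hz, fun h => hzy (hup h (lay_mono_aux le_rfl hxy))⟩)
      (fun x y ⟨z, hz, hzx⟩ ⟨w, hw, hwy⟩ => by
        refine ⟨z ⊓ w, G.property.2.2.1 hz hw, fun h => ?_⟩
        have : lay (z ⊓ w) (x ⊔ y) ≤ lay z x ⊔ lay w y :=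
          (lay_le_iff_rimp _ _ _).2 (sup_le
            ((lay_le_iff_rimp _ _ _).1 ((lay_mono_aux inf_le_left le_rfl).trans le_sup_left))
            ((lay_le_iff_rimp _ _ _).1 ((lay_mono_aux inf_le_right le_rfl).trans le_sup_right)))
        exact (hpr _ _ (hup h this)).elim hzx hwy)
      b (fun ⟨x, hx, hxb⟩ => hG x hx hxb)
    refine ⟨⟨F, hF⟩, G, H, subset_rfl, ?_, haG, hbH⟩
    intro x hx y hy
    by_contra hc
    exact hH y hy ⟨x, hx, hc⟩
  · rintro ⟨F', G, H, hs, hR, ha, hb⟩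
    exact hs (hR a ha b hb)
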